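/- arXiv:2208.12057 — 2 statements merged into one kernel-verified Lean document; each statement's English description precedes it below -/
import Mathlib

section
/- Let (V, B) be a Steiner triple system, let a and b be distinct points of V, let n be an even number with n ≥ 4, and let x₁, x₂, …, xₙ be distinct points of V ∖ {a, b} such that the blocks {a, x₁, x₂}, {b, x₂, x₃}, {a, x₃, x₄}, {b, x₄, x₅}, …, {a, x_{n−1}, xₙ}, {b, xₙ, x₁} all belong to B (indices taken cyclically, with blocks of a and b alternating). Then the pair (V, B′), where B′ is obtained from B by removing these n blocks and adding the n blocks {b, x₁, x₂}, {a, x₂, x₃}, {b, x₃, x₄}, {a, x₄, x₅}, …, {b, x_{n−1}, xₙ}, {a, xₙ, x₁} obtained by interchanging a and b, is again a Steiner triple system. -/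
/-!
A cycle switch is an instance of *trading*. Replacing a set `S` of blocks of a Steiner triple
system by a set `T` of triples gives a Steiner triple system as soon as `S` and `T` cover the same
pairs and no pair lies in two members of `T` (`trade_yields_sts`).

For the cycle switch, write `e i` for the apex (`a` or `b`) of the removed block
`{e i, x i, x (i+1)}`. Its pair `{x i, x (i+1)}` is covered by the added block with the same index,
and its pairs `{e i, x i}` and `{e i, x (i+1)}` by the added blocks with indices `i - 1` and
`i + 1`, whose apex is `e i` because the apexes alternate and `n` is even. The situation is
symmetric in `a` and `b`, so `exists_switched_cycleBlock_cover` serves both directions. Two added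
blocks sharing a pair coincide (`cycleBlock_index_unique`): two distinct edges of a cycle of length
at least `4` share at most one vertex, and if they share one they are consecutive, so their apexes
differ.
-/

/-- The block of index `i` in the alternating cycle of triples on the `n`-cycle `x 0, …, x (n-1)`,
with apex `c` at even and `d` at odd indices. -/
def cycleBlock {α : Type*} [DecidableEq α] (c d : α) (n : ℕ) (x : ℕ → α) (i : ℕ) : Finset α :=
  {(if Even i then c else d), x i, x ((i + 1) % n)}

/-- `S` is the set of removed blocks and `T` the set of added ones. -/
theorem trade_yields_sts {α : Type*} [DecidableEq α]
    (V : Finset α) (B S T : Finset (Finset α))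
    (hB : ∀ bl ∈ B, bl ⊆ V ∧ bl.card = 3)
    (hSTS : ∀ p ⊆ V, p.card = 2 → ∃! bl, bl ∈ B ∧ p ⊆ bl)
    (hSB : S ⊆ B)
    (hT : ∀ t ∈ T, t ⊆ V ∧ t.card = 3)
    (hTS : ∀ t ∈ T, ∀ u ∈ t, ∀ v ∈ t, u ≠ v → ∃ s ∈ S, u ∈ s ∧ v ∈ s)
    (hST : ∀ s ∈ S, ∀ u ∈ s, ∀ v ∈ s, u ≠ v → ∃ t ∈ T, u ∈ t ∧ v ∈ t)
    (hTT : ∀ t ∈ T, ∀ t' ∈ T, ∀ u v, u ≠ v → u ∈ t → v ∈ t → u ∈ t' → v ∈ t' → t = t') :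
    (∀ bl ∈ B \ S ∪ T, bl ⊆ V ∧ bl.card = 3) ∧
    (∀ p ⊆ V, p.card = 2 → ∃! bl, bl ∈ B \ S ∪ T ∧ p ⊆ bl) := by
  refine ⟨fun bl hbl => ?_, fun p hpV hp => ?_⟩
  · rcases Finset.mem_union.1 hbl with h | h
    · exact hB bl (Finset.mem_sdiff.1 h).1
    · exact hT bl h
  obtain ⟨bl, ⟨hbl, hpbl⟩, huniq⟩ := hSTS p hpV hp
  obtain ⟨u, v, huv, rfl⟩ := Finset.card_eq_two.1 hp
  simp only [Finset.insert_subset_iff, Finset.singleton_subset_iff, Finset.mem_union,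
    Finset.mem_sdiff] at *
  by_cases hS : bl ∈ S
  · obtain ⟨t, ht, hut, hvt⟩ := hST bl hS u hpbl.1 v hpbl.2 huv
    refine ⟨t, ⟨Or.inr ht, hut, hvt⟩, ?_⟩
    rintro y ⟨⟨hyB, hyS⟩ | hyT, hy⟩
    · exact absurd (huniq y ⟨hyB, hy⟩ ▸ hS) hyS
    · exact hTT y hyT t ht u v huv hy.1 hy.2 hut hvt
  · refine ⟨bl, ⟨Or.inl ⟨hbl, hS⟩, hpbl⟩, ?_⟩
    rintro y ⟨⟨hyB, hyS⟩ | hyT, hy⟩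
    · exact huniq y ⟨hyB, hy⟩
    · obtain ⟨s, hs, hsp⟩ := hTS y hyT u hy.1 v hy.2 huv
      exact absurd (huniq s ⟨hSB hs, hsp⟩ ▸ hs) hS

theorem cyclic_succ_cases {n i : ℕ} (hi : i < n) :
    (i + 1 < n ∧ (i + 1) % n = i + 1) ∨ (i + 1 = n ∧ (i + 1) % n = 0) := by
  rcases Nat.lt_or_ge (i + 1) n with h | h
  · exact Or.inl ⟨h, Nat.mod_eq_of_lt h⟩
  · have h' : i + 1 = n := by omega
    exact Or.inr ⟨h', by rw [h', Nat.mod_self]⟩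

theorem exists_cyclic_pred {n i : ℕ} (hneven : Even n) (hi : i < n) :
    ∃ j < n, (j + 1) % n = i ∧ (Even j ↔ ¬ Even i) := by
  rw [Nat.even_iff] at hneven
  rcases Nat.eq_zero_or_pos i with h | h
  · refine ⟨n - 1, by omega, ?_, by simp only [Nat.even_iff]; omega⟩
    rw [Nat.sub_add_cancel (by omega), Nat.mod_self, h]
  · refine ⟨i - 1, by omega, ?_, by simp only [Nat.even_iff]; omega⟩
    rw [Nat.sub_add_cancel h, Nat.mod_eq_of_lt hi]

theorem even_cyclic_succ {n i : ℕ} (hneven : Even n) (hi : i < n) :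
    Even ((i + 1) % n) ↔ ¬ Even i := by
  rw [Nat.even_iff] at hneven
  simp only [Nat.even_iff]
  rcases cyclic_succ_cases hi with h | h <;> omega

/-- Interchanging the two apexes does not lose any covered pair. -/
theorem exists_switched_cycleBlock_cover {α : Type*} [DecidableEq α] (c d : α) {n : ℕ}
    (hneven : Even n) (x : ℕ → α) {i : ℕ} (hi : i < n) {u v : α} (huv : u ≠ v)
    (hu : u ∈ cycleBlock c d n x i) (hv : v ∈ cycleBlock c d n x i) :
    ∃ j < n, u ∈ cycleBlock d c n x j ∧ v ∈ cycleBlock d c n x j := by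
  obtain ⟨k, hk, hki, hkpar⟩ := exists_cyclic_pred hneven hi
  have hspar := even_cyclic_succ hneven hi
  have hs : (i + 1) % n < n := Nat.mod_lt _ (by omega)
  have apex_pred : (if Even k then d else c) = if Even i then c else d := by
    by_cases h : Even i <;> simp [hkpar, h]
  have apex_succ : (if Even ((i + 1) % n) then d else c) = if Even i then c else d := by
    by_cases h : Even i <;> simp [hspar, h]
  simp only [cycleBlock, Finset.mem_insert, Finset.mem_singleton] at hu hv ⊢
  rcases hu with hu | hu | hu <;> rcases hv with hv | hv | hv
  · exact absurd (hu.trans hv.symm) huv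
  · exact ⟨k, hk, Or.inl (hu.trans apex_pred.symm), Or.inr (Or.inr (by rw [hki]; exact hv))⟩
  · exact ⟨_, hs, Or.inl (hu.trans apex_succ.symm), Or.inr (Or.inl hv)⟩
  · exact ⟨k, hk, Or.inr (Or.inr (by rw [hki]; exact hu)), Or.inl (hv.trans apex_pred.symm)⟩
  · exact absurd (hu.trans hv.symm) huv
  · exact ⟨i, hi, Or.inr (Or.inl hu), Or.inr (Or.inr hv)⟩
  · exact ⟨_, hs, Or.inr (Or.inl hu), Or.inl (hv.trans apex_succ.symm)⟩
  · exact ⟨i, hi, Or.inr (Or.inr hu), Or.inr (Or.inl hv)⟩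
  · exact absurd (hu.trans hv.symm) huv

/-- The index of the cycle point is kept explicit, so that injectivity of `x` can be applied. -/
theorem mem_cycleBlock_cases {α : Type*} [DecidableEq α] {c d : α} {n : ℕ} {x : ℕ → α}
    {i : ℕ} (hi : i < n) {u : α} (hu : u ∈ cycleBlock c d n x i) :
    u = (if Even i then c else d) ∨ ∃ k < n, u = x k ∧ (k = i ∨ k = (i + 1) % n) := by
  simp only [cycleBlock, Finset.mem_insert, Finset.mem_singleton] at hu
  rcases hu with hu | hu | hu
  · exact Or.inl hu
  · exact Or.inr ⟨i, hi, hu, Or.inl rfl⟩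
  · exact Or.inr ⟨(i + 1) % n, Nat.mod_lt _ (by omega), hu, Or.inr rfl⟩

theorem cycleBlock_index_unique {α : Type*} [DecidableEq α] {c d : α} (hcd : c ≠ d)
    {n : ℕ} (hn4 : 4 ≤ n) (hneven : Even n) {x : ℕ → α}
    (hxc : ∀ i < n, x i ≠ c) (hxd : ∀ i < n, x i ≠ d)
    (hxinj : ∀ i < n, ∀ j < n, x i = x j → i = j)
    {i j : ℕ} (hi : i < n) (hj : j < n) {u v : α} (huv : u ≠ v)
    (hui : u ∈ cycleBlock c d n x i) (hvi : v ∈ cycleBlock c d n x i)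
    (huj : u ∈ cycleBlock c d n x j) (hvj : v ∈ cycleBlock c d n x j) : i = j := by
  have apex_ne : ∀ m : ℕ, ∀ k < n, (if Even m then c else d) ≠ x k := by
    intro m k hk
    split_ifs
    · exact (hxc k hk).symm
    · exact (hxd k hk).symm
  have apex_parity : (if Even i then c else d) = (if Even j then c else d) →
      (Even i ↔ Even j) := by
    intro h
    split_ifs at h with h1 h2 h2
    · exact iff_of_true h1 h2
    · exact absurd h hcd
    · exact absurd h.symm hcd
    · exact iff_of_false h1 h2
  rw [Nat.even_iff] at hneven
  simp only [Nat.even_iff] at apex_parity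
  have hsi := cyclic_succ_cases hi
  have hsj := cyclic_succ_cases hj
  -- A common apex forces equal parity, so a common cycle point forces equal indices.
  have key : ∀ w, (if i % 2 = 0 then c else d) = (if j % 2 = 0 then c else d) →
      (∃ k < n, w = x k ∧ (k = i ∨ k = (i + 1) % n)) →
      (∃ k < n, w = x k ∧ (k = j ∨ k = (j + 1) % n)) → i = j := by
    rintro w h ⟨k, hk, rfl, hki⟩ ⟨l, hl, hkl, hlj⟩
    have := hxinj k hk l hl hkl
    have := apex_parity h
    omega
  have hui := mem_cycleBlock_cases hi hui
  have hvi := mem_cycleBlock_cases hi hvi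
  have huj := mem_cycleBlock_cases hj huj
  have hvj := mem_cycleBlock_cases hj hvj
  simp only [Nat.even_iff] at hui hvi huj hvj apex_ne
  rcases hui with hui | hui
  · rcases hvi with hvi | hvi
    · exact absurd (hui.trans hvi.symm) huv
    rcases huj with huj | ⟨l, hl, hul, -⟩
    · rcases hvj with hvj | hvj
      · exact absurd (huj.trans hvj.symm) huv
      · exact key v (hui.symm.trans huj) hvi hvj
    · exact absurd (hui.symm.trans hul) (apex_ne i l hl)
  · rcases huj with huj | huj
    · obtain ⟨k, hk, huk, -⟩ := hui
      exact absurd (huj.symm.trans huk) (apex_ne j k hk)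
    rcases hvi with hvi | hvi
    · rcases hvj with hvj | ⟨l, hl, hvl, -⟩
      · exact key u (hvi.symm.trans hvj) hui huj
      · exact absurd (hvi.symm.trans hvl) (apex_ne i l hl)
    rcases hvj with hvj | hvj
    · obtain ⟨k, hk, hvk, -⟩ := hvi
      exact absurd (hvj.symm.trans hvk) (apex_ne j k hk)
    -- Both points lie on the cycle: two distinct edges of it cannot share both ends.
    obtain ⟨k, hk, rfl, hki⟩ := hui
    obtain ⟨l, hl, rfl, hli⟩ := hvi
    obtain ⟨k', hk', hkk, hkj⟩ := huj
    obtain ⟨l', hl', hll, hlj⟩ := hvj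
    have := hxinj k hk k' hk' hkk
    have := hxinj l hl l' hl' hll
    have : k ≠ l := fun h => huv (by rw [h])
    omega

theorem cycleBlock_subset_and_card {α : Type*} [DecidableEq α] {V : Finset α} {c d : α}
    (hc : c ∈ V) (hd : d ∈ V) {n : ℕ} (hn4 : 4 ≤ n) {x : ℕ → α}
    (hxV : ∀ i < n, x i ∈ V) (hxc : ∀ i < n, x i ≠ c) (hxd : ∀ i < n, x i ≠ d)
    (hxinj : ∀ i < n, ∀ j < n, x i = x j → i = j) {i : ℕ} (hi : i < n) :
    cycleBlock c d n x i ⊆ V ∧ (cycleBlock c d n x i).card = 3 := by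
  have hs : (i + 1) % n < n := Nat.mod_lt _ (by omega)
  have hne : x i ≠ x ((i + 1) % n) := fun h => by
    have := hxinj _ hi _ hs h
    rcases cyclic_succ_cases hi with h | h <;> omega
  constructor
  · simp only [cycleBlock, Finset.insert_subset_iff, Finset.singleton_subset_iff]
    refine ⟨?_, hxV i hi, hxV _ hs⟩
    split_ifs
    · exact hc
    · exact hd
  · refine Finset.card_eq_three.2 ⟨_, _, _, ?_, ?_, hne, rfl⟩
    · split_ifs
      · exact (hxc i hi).symm
      · exact (hxd i hi).symm
    · split_ifs
      · exact (hxc _ hs).symm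
      · exact (hxd _ hs).symm

/-- A cycle switch: replacing the blocks `{a,x₁,x₂}, {b,x₂,x₃}, …, {b,xₙ,x₁}` of a
Steiner triple system by the blocks obtained by interchanging `a` and `b` yields again a
Steiner triple system.  (Indices are taken cyclically; here they are 0-based, so block `i`
contains `a` if `i` is even and `b` if `i` is odd.) -/
theorem cycle_switch_yields_sts {α : Type*} [DecidableEq α]
    (V : Finset α) (B : Finset (Finset α))
    -- (V, B) is a Steiner triple system:
    (hB : ∀ bl ∈ B, bl ⊆ V ∧ bl.card = 3)
    (hSTS : ∀ p ⊆ V, p.card = 2 → ∃! bl, bl ∈ B ∧ p ⊆ bl)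
    (a b : α) (ha : a ∈ V) (hb : b ∈ V) (hab : a ≠ b)
    (n : ℕ) (hn4 : 4 ≤ n) (hneven : Even n)
    (x : ℕ → α)
    (hxV : ∀ i < n, x i ∈ V)
    (hxa : ∀ i < n, x i ≠ a) (hxb : ∀ i < n, x i ≠ b)
    (hxinj : ∀ i < n, ∀ j < n, x i = x j → i = j)
    (hblocks : ∀ i < n,
      ({(if Even i then a else b), x i, x ((i + 1) % n)} : Finset α) ∈ B)
    (B' : Finset (Finset α))
    (hB' : B' = (B \ (Finset.range n).image
          (fun i => ({(if Even i then a else b), x i, x ((i + 1) % n)} : Finset α)))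
        ∪ (Finset.range n).image
          (fun i => ({(if Even i then b else a), x i, x ((i + 1) % n)} : Finset α))) :
    (∀ bl ∈ B', bl ⊆ V ∧ bl.card = 3) ∧
    (∀ p ⊆ V, p.card = 2 → ∃! bl, bl ∈ B' ∧ p ⊆ bl) := by
  subst hB'
  refine trade_yields_sts V B ((Finset.range n).image (cycleBlock a b n x))
    ((Finset.range n).image (cycleBlock b a n x)) hB hSTS ?_ ?_ ?_ ?_ ?_ <;>
    simp only [Finset.forall_mem_image, Finset.exists_mem_image, Finset.mem_range,
      Finset.image_subset_iff]
  · exact hblocks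
  · intro i hi
    exact cycleBlock_subset_and_card hb ha hn4 hxV hxb hxa hxinj hi
  · intro i hi u hu v hv huv
    exact exists_switched_cycleBlock_cover b a hneven x hi huv hu hv
  · intro i hi u hu v hv huv
    exact exists_switched_cycleBlock_cover a b hneven x hi huv hu hv
  · intro i hi j hj u v huv hui hvi huj hvj
    rw [cycleBlock_index_unique hab.symm hn4 hneven hxb hxa hxinj hi hj huv hui hvi huj hvj]
end

section
/- Let (V, B) be a Steiner triple system, let {x, y, z} be a 3-element subset of V that is not a block, and let x′, y′, z′ be the points such that {x′, y, z}, {x, y′, z}, {x, y, z′} ∈ B. Suppose further that none of {x, y′, z′}, {x′, y, z′}, {x′, y′, z} is a block of B. Let B″ = (B ∖ {{x′, y, z}, {x, y′, z}, {x, y, z′}}) ∪ {{x, y, z}, {x, y′, z′}, {x′, y, z′}, {x′, y′, z}}. Then: if {x′, y′, z′} ∈ B, the pair (V, B″ ∖ {{x′, y′, z′}}) is a Steiner triple system; and if {x′, y′, z′} ∉ B, the family B″ covers every 2-element subset of V not contained in {x′, y′, z′} exactly once and covers each 2-element subset of {x′, y′, z′} exactly twice. -/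
/-!
The six points `x, y, z, x', y', z'` are distinct, and the eight triples that pick one point from
each of `{x, x'}`, `{y, y'}`, `{z, z'}` are the faces of an octahedron with these vertices. Colour
the faces by the parity of the number of primed points. Two faces sharing an edge have opposite
colours, so every pair of points lies in as many even faces as odd faces
(`octahedron_cover_eq`). The even faces are the four blocks added, none of which is a block of `B`;
the odd faces are the three blocks removed together with `{x', y', z'}`. Exchanging the added
triples for the removed ones therefore raises the number of blocks through a pair by one if the
pair lies in `{x', y', z'}` and by zero otherwise, and removing `{x', y', z'}`, when it is a
block, cancels this excess.
-/

/-- The number of members of the family `F` containing the pair `pr`. -/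
def coverCount {α : Type*} [DecidableEq α] (F : Finset (Finset α)) (pr : Finset α) : ℕ :=
  (F.filter (fun bl => pr ⊆ bl)).card

section coverCount

variable {α : Type*} [DecidableEq α]

lemma coverCount_union {F G : Finset (Finset α)} (h : Disjoint F G) (pr : Finset α) :
    coverCount (F ∪ G) pr = coverCount F pr + coverCount G pr := by
  unfold coverCount
  rw [Finset.filter_union, Finset.card_union_of_disjoint (Finset.disjoint_filter_filter h)]

lemma coverCount_sdiff {F G : Finset (Finset α)} (h : G ⊆ F) (pr : Finset α) :
    coverCount (F \ G) pr + coverCount G pr = coverCount F pr := by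
  rw [← coverCount_union Finset.sdiff_disjoint, Finset.sdiff_union_of_subset h]

lemma coverCount_insert {F : Finset (Finset α)} {t : Finset α} (h : t ∉ F) (pr : Finset α) :
    coverCount (insert t F) pr = (if pr ⊆ t then 1 else 0) + coverCount F pr := by
  unfold coverCount
  rw [Finset.filter_insert]
  split_ifs
  · rw [Finset.card_insert_of_notMem (by simp [h]), add_comm]
  · simp

lemma coverCount_singleton (t pr : Finset α) :
    coverCount {t} pr = if pr ⊆ t then 1 else 0 := by
  unfold coverCount
  rw [Finset.filter_singleton]
  split_ifs <;> simp

lemma coverCount_eq_one_iff (F : Finset (Finset α)) (pr : Finset α) :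
    coverCount F pr = 1 ↔ ∃! bl, bl ∈ F ∧ pr ⊆ bl := by
  unfold coverCount
  rw [Finset.card_eq_one, Finset.singleton_iff_unique_mem]
  simp only [Finset.mem_filter]

/-- Every pair of points lies in equally many even and odd faces of the octahedron with antipodal
vertices `x, x'`, `y, y'` and `z, z'`. -/
lemma octahedron_cover_eq {x y z x' y' z' : α} (hd : [x, y, z, x', y', z'].Nodup)
    {pr : Finset α} (hpr : pr.card = 2) :
    coverCount {{x, y, z}, {x, y', z'}, {x', y, z'}, {x', y', z}} pr =
      coverCount {{x', y, z}, {x, y', z}, {x, y, z'}} pr +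
        (if pr ⊆ {x', y', z'} then 1 else 0) := by
  obtain ⟨a, b, hab, rfl⟩ := Finset.card_eq_two.mp hpr
  simp only [List.nodup_cons, List.mem_cons, List.not_mem_nil, or_false, not_or] at hd
  obtain ⟨⟨_, _, _, _, _⟩, ⟨_, _, _, _⟩, ⟨_, _, _⟩, ⟨_, _⟩, _, _⟩ := hd
  -- Two of the listed faces are distinct because one has a vertex that the other lacks.
  rw [coverCount_insert, coverCount_insert, coverCount_insert, coverCount_singleton,
    coverCount_insert, coverCount_insert, coverCount_singleton]
  · simp only [Finset.insert_subset_iff, Finset.singleton_subset_iff, Finset.mem_insert,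
      Finset.mem_singleton]
    by_cases a = x <;> by_cases a = y <;> by_cases a = z <;> by_cases a = x' <;>
      by_cases a = y' <;> by_cases a = z' <;> grind
  all_goals
    simp only [Finset.mem_insert, Finset.mem_singleton, Finset.Subset.antisymm_iff,
      Finset.insert_subset_iff, Finset.singleton_subset_iff]
    grind

lemma ne_of_card_triple {a b c : α} (h : ({a, b, c} : Finset α).card = 3) :
    a ≠ b ∧ a ≠ c ∧ b ≠ c := by
  have hle : ∀ p q : α, ({a, b, c} : Finset α) ≠ {p, q} := by
    intro p q he
    have := Finset.card_le_two (a := p) (b := q)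
    rw [← he] at this
    omega
  refine ⟨?_, ?_, ?_⟩ <;> rintro rfl
  · exact hle a c (by simp)
  · exact hle b a (by simp)
  · exact hle a b (by simp)

end coverCount

/-- One perturbation step of Cameron's algorithm at a proper STS.  Let `{x,y,z}` be a
non-block 3-subset, let `x', y', z'` be the points with `{x',y,z}, {x,y',z}, {x,y,z'} ∈ B`,
and suppose none of `{x,y',z'}, {x',y,z'}, {x',y',z}` is a block.  Put
`B'' = (B ∖ {{x',y,z},{x,y',z},{x,y,z'}}) ∪ {{x,y,z},{x,y',z'},{x',y,z'},{x',y',z}}`.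
If `{x',y',z'} ∈ B` then `(V, B'' ∖ {{x',y',z'}})` is an STS; if `{x',y',z'} ∉ B` then `B''`
covers every 2-subset of `V` not contained in `{x',y',z'}` exactly once and each 2-subset of
`{x',y',z'}` exactly twice. -/
theorem cameron_perturbation_step {α : Type*} [DecidableEq α]
    (V : Finset α) (B : Finset (Finset α))
    (hB : ∀ bl ∈ B, bl ⊆ V ∧ bl.card = 3)
    (hSTS : ∀ pr ⊆ V, pr.card = 2 → ∃! bl, bl ∈ B ∧ pr ⊆ bl)
    (x y z x' y' z' : α)
    (hxyzV : ({x, y, z} : Finset α) ⊆ V)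
    (hxyzcard : ({x, y, z} : Finset α).card = 3)
    (hxyz : ({x, y, z} : Finset α) ∉ B)
    (h1 : ({x', y, z} : Finset α) ∈ B)
    (h2 : ({x, y', z} : Finset α) ∈ B)
    (h3 : ({x, y, z'} : Finset α) ∈ B)
    (h4 : ({x, y', z'} : Finset α) ∉ B)
    (h5 : ({x', y, z'} : Finset α) ∉ B)
    (h6 : ({x', y', z} : Finset α) ∉ B)
    (B'' : Finset (Finset α))
    (hB'' : B'' = (B \ ({{x', y, z}, {x, y', z}, {x, y, z'}} : Finset (Finset α)))
        ∪ ({{x, y, z}, {x, y', z'}, {x', y, z'}, {x', y', z}} : Finset (Finset α))) :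
    (({x', y', z'} : Finset α) ∈ B →
      (∀ bl ∈ B'' \ ({{x', y', z'}} : Finset (Finset α)), bl ⊆ V ∧ bl.card = 3) ∧
      (∀ pr ⊆ V, pr.card = 2 →
        ∃! bl, bl ∈ B'' \ ({{x', y', z'}} : Finset (Finset α)) ∧ pr ⊆ bl)) ∧
    (({x', y', z'} : Finset α) ∉ B →
      (∀ pr ⊆ V, pr.card = 2 → ¬ pr ⊆ ({x', y', z'} : Finset α) →
        (B''.filter (fun bl => pr ⊆ bl)).card = 1) ∧
      (∀ pr ⊆ V, pr.card = 2 → pr ⊆ ({x', y', z'} : Finset α) →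
        (B''.filter (fun bl => pr ⊆ bl)).card = 2)) := by
  have huniq : ∀ p q : α, p ≠ q → ∀ s ∈ B, ∀ t ∈ B, p ∈ s → q ∈ s → p ∈ t → q ∈ t → s = t := by
    intro p q hpq s hs t ht hps hqs hpt hqt
    have hsub : ∀ u : Finset α, p ∈ u → q ∈ u → ({p, q} : Finset α) ⊆ u := by
      intro u hp hq
      simp [Finset.insert_subset_iff, hp, hq]
    exact (hSTS {p, q} (hsub V ((hB s hs).1 hps) ((hB s hs).1 hqs))
      (Finset.card_pair hpq)).unique ⟨hs, hsub s hps hqs⟩ ⟨ht, hsub t hpt hqt⟩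
  obtain ⟨hxy, hxz, hyz⟩ := ne_of_card_triple hxyzcard
  obtain ⟨hx'y, hx'z, -⟩ := ne_of_card_triple (hB _ h1).2
  obtain ⟨hxy', -, hy'z⟩ := ne_of_card_triple (hB _ h2).2
  obtain ⟨-, hxz', hyz'⟩ := ne_of_card_triple (hB _ h3).2
  have hxx' : x ≠ x' := by rintro rfl; exact hxyz h1
  have hyy' : y ≠ y' := by rintro rfl; exact hxyz h2
  have hzz' : z ≠ z' := by rintro rfl; exact hxyz h3
  -- If two primed points agreed, two of the removed blocks would share a pair and so coincide.
  have hx'y' : x' ≠ y' := by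
    intro h
    have := huniq x' z hx'z _ h1 _ h2 (by simp) (by simp) (by simp [h]) (by simp)
    have hx : x ∈ ({x', y, z} : Finset α) := by rw [this]; simp
    simp only [Finset.mem_insert, Finset.mem_singleton] at hx
    tauto
  have hx'z' : x' ≠ z' := by
    intro h
    have := huniq x' y hx'y _ h1 _ h3 (by simp) (by simp) (by simp [h]) (by simp)
    have hx : x ∈ ({x', y, z} : Finset α) := by rw [this]; simp
    simp only [Finset.mem_insert, Finset.mem_singleton] at hx
    tauto
  have hy'z' : y' ≠ z' := by
    intro h
    have := huniq x y' hxy' _ h2 _ h3 (by simp) (by simp) (by simp) (by simp [h])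
    have hy : y ∈ ({x, y', z} : Finset α) := by rw [this]; simp
    simp only [Finset.mem_insert, Finset.mem_singleton] at hy
    tauto
  have hd : [x, y, z, x', y', z'].Nodup := by
    simp only [List.nodup_cons, List.mem_cons, List.not_mem_nil, or_false, not_or]
    grind
  have hdisj : Disjoint (B \ ({{x', y, z}, {x, y', z}, {x, y, z'}} : Finset (Finset α)))
      ({{x, y, z}, {x, y', z'}, {x', y, z'}, {x', y', z}} : Finset (Finset α)) := by
    refine Finset.disjoint_of_subset_left Finset.sdiff_subset ?_
    simp [hxyz, h4, h5, h6]
  have hrem : ({{x', y, z}, {x, y', z}, {x, y, z'}} : Finset (Finset α)) ⊆ B := by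
    simp [Finset.insert_subset_iff, h1, h2, h3]
  have hcount : ∀ pr ⊆ V, pr.card = 2 →
      coverCount B'' pr = 1 + (if pr ⊆ {x', y', z'} then 1 else 0) := by
    intro pr hprV hpr
    have e1 := (coverCount_eq_one_iff B pr).mpr (hSTS pr hprV hpr)
    have e2 := coverCount_sdiff hrem pr
    have e3 := octahedron_cover_eq hd hpr
    rw [hB'', coverCount_union hdisj]
    omega
  refine ⟨fun hT => ⟨?_, ?_⟩, fun _ => ⟨?_, ?_⟩⟩
  · intro bl hbl
    have hV1 := (hB _ h1).1
    have hV2 := (hB _ h2).1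
    have hV3 := (hB _ h3).1
    simp only [Finset.insert_subset_iff, Finset.singleton_subset_iff] at hV1 hV2 hV3
    rw [hB''] at hbl
    simp only [Finset.mem_sdiff, Finset.mem_union, Finset.mem_insert, Finset.mem_singleton] at hbl
    obtain ⟨⟨hbl, -⟩ | rfl | rfl | rfl | rfl, -⟩ := hbl
    · exact hB bl hbl
    · exact ⟨hxyzV, hxyzcard⟩
    all_goals
      refine ⟨by simp [Finset.insert_subset_iff, hV1, hV2, hV3], ?_⟩
      rw [Finset.card_eq_three]
      exact ⟨_, _, _, by grind, by grind, by grind, rfl⟩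
  · intro pr hprV hpr
    have hTB'' : ({{x', y', z'}} : Finset (Finset α)) ⊆ B'' := by
      rw [Finset.singleton_subset_iff, hB'', Finset.mem_union, Finset.mem_sdiff]
      -- Each removed block has an unprimed point, so `{x', y', z'}` is not among them.
      refine Or.inl ⟨hT, ?_⟩
      simp only [Finset.mem_insert, Finset.mem_singleton, Finset.Subset.antisymm_iff,
        Finset.insert_subset_iff, Finset.singleton_subset_iff]
      grind
    rw [← coverCount_eq_one_iff]
    have e1 := coverCount_sdiff hTB'' pr
    rw [coverCount_singleton, hcount pr hprV hpr] at e1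
    omega
  · intro pr hprV hpr hn
    simpa [coverCount, hn] using hcount pr hprV hpr
  · intro pr hprV hpr hs
    simpa [coverCount, hs] using hcount pr hprV hpr
end
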